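/- The family of coherent sets of gambles on Ω is atomic and atomistic: for every coherent set of gambles D there exists a maximal coherent set M with D ⊆ M (so At(D) ≠ ∅), and D equals the intersection of all maximal coherent sets containing it, D = ⋂ At(D). -/

import Mathlib

open Set

universe u

/-- The set of gambles on `Ω`: bounded real-valued functions. -/
def Gmb (Ω : Type u) : Set (Ω → ℝ) := {f | ∃ B : ℝ, ∀ ω, |f ω| ≤ B}

/-- `L⁺(Ω)`: non-negative, non-vanishing gambles. -/
def GmbPos (Ω : Type u) : Set (Ω → ℝ) :=
  {f | f ∈ Gmb Ω ∧ (∀ ω, 0 ≤ f ω) ∧ f ≠ 0}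

/-- Coherent set of gambles. -/
def Coherent {Ω : Type u} (D : Set (Ω → ℝ)) : Prop :=
  D ⊆ Gmb Ω ∧ GmbPos Ω ⊆ D ∧ (0 : Ω → ℝ) ∉ D ∧
    (∀ f ∈ D, ∀ g ∈ D, f + g ∈ D) ∧
    (∀ f ∈ D, ∀ c : ℝ, 0 < c → c • f ∈ D)

/-- Maximal coherent set of gambles: no coherent set properly contains it. -/
def MaxCoh {Ω : Type u} (M : Set (Ω → ℝ)) : Prop :=
  Coherent M ∧ ∀ D : Set (Ω → ℝ), Coherent D → M ⊆ D → D = M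

/-- Membership in `Φ(Ω)`: coherent sets together with `L(Ω)`. -/
def PhiMem {Ω : Type u} (D : Set (Ω → ℝ)) : Prop :=
  Coherent D ∨ D = Gmb Ω

/-- The closure operator `C` on sets of gambles. -/
def Cl {Ω : Type u} (A : Set (Ω → ℝ)) : Set (Ω → ℝ) :=
  ⋂₀ {D | PhiMem D ∧ A ⊆ D}

/-- Order on partitions (as equivalence relations): `ple x y` iff `𝒫x ≤ 𝒫y`,
i.e. `y` refines `x`. -/
def ple {Ω : Type u} (x y : Setoid Ω) : Prop := ∀ a b : Ω, y.r a b → x.r a b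

/-- Join of two partitions: the relation is the conjunction. -/
def pjoin {Ω : Type u} (x y : Setoid Ω) : Setoid Ω :=
  ⟨fun a b => x.r a b ∧ y.r a b,
    ⟨fun a => ⟨x.iseqv.refl a, y.iseqv.refl a⟩,
     fun h => ⟨x.iseqv.symm h.1, y.iseqv.symm h.2⟩,
     fun h h' => ⟨x.iseqv.trans h.1 h'.1, y.iseqv.trans h.2 h'.2⟩⟩⟩

/-- Conditional independence of partitions: blocks are equivalence classes,
`B1 ∩ B ≠ ∅` and `B2 ∩ B ≠ ∅` imply `B1 ∩ B2 ∩ B ≠ ∅`. -/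
def CondIndep {Ω : Type u} (p1 p2 p : Setoid Ω) : Prop :=
  ∀ a b c : Ω, (∃ u, p1.r a u ∧ p.r c u) → (∃ v, p2.r b v ∧ p.r c v) →
    ∃ w, p1.r a w ∧ p2.r b w ∧ p.r c w

/-- Saturation operator of a partition. -/
def sat {Ω : Type u} (x : Setoid Ω) (S : Set Ω) : Set Ω :=
  {ω | ∃ ω' ∈ S, x.r ω ω'}

/-- `L_x`: the `x`-measurable gambles. -/
def Meas {Ω : Type u} (x : Setoid Ω) : Set (Ω → ℝ) :=
  {f | f ∈ Gmb Ω ∧ ∀ a b : Ω, x.r a b → f a = f b}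

/-- Extraction operator `ε_x`. -/
def eps {Ω : Type u} (x : Setoid Ω) (D : Set (Ω → ℝ)) : Set (Ω → ℝ) :=
  Cl (D ∩ Meas x)

/-- `At(D)`: maximal coherent sets dominating `D`. -/
def Atoms {Ω : Type u} (D : Set (Ω → ℝ)) : Set (Set (Ω → ℝ)) :=
  {M | MaxCoh M ∧ D ⊆ M}

/-- `D_S`: the coherent set of gambles associated to a set `S ⊆ Ω`. -/
def DS {Ω : Type u} (S : Set Ω) : Set (Ω → ℝ) :=
  {f | f ∈ Gmb Ω ∧ 0 < sInf (f '' S)} ∪ GmbPos Ω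

/-- `posi(K)`: positive linear hull. -/
def posi {Ω : Type u} (K : Set (Ω → ℝ)) : Set (Ω → ℝ) :=
  {g | ∃ r : ℕ, 1 ≤ r ∧ ∃ (lam : Fin r → ℝ) (f : Fin r → (Ω → ℝ)),
    (∀ j, 0 < lam j) ∧ (∀ j, f j ∈ K) ∧ g = ∑ j, lam j • f j}

theorem exists_max_aux {Ω : Type u} (D : Set (Ω → ℝ)) (hD : Coherent D) :
    ∃ M, MaxCoh M ∧ D ⊆ M := by
  obtain ⟨M, hDM, hM⟩ := zorn_subset_nonempty {E : Set (Ω → ℝ) | Coherent E} (by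
    intro c hc hchain hne
    obtain ⟨E0, hE0⟩ := hne
    refine ⟨⋃₀ c, ⟨?_, ?_, ?_, ?_, ?_⟩, fun s hs => subset_sUnion_of_mem hs⟩
    · exact sUnion_subset fun s hs => (hc hs).1
    · exact (hc hE0).2.1.trans (subset_sUnion_of_mem hE0)
    · rintro ⟨s, hs, h0⟩
      exact (hc hs).2.2.1 h0
    · rintro f ⟨s, hs, hf⟩ g ⟨t, ht, hg⟩
      rcases hchain.total hs ht with h | h
      · exact ⟨t, ht, (hc ht).2.2.2.1 f (h hf) g hg⟩
      · exact ⟨s, hs, (hc hs).2.2.2.1 f hf g (h hg)⟩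
    · rintro f ⟨s, hs, hf⟩ r hr
      exact ⟨s, hs, (hc hs).2.2.2.2 f hf r hr⟩) D hD
  refine ⟨M, ⟨hM.prop, fun E hE hME => ?_⟩, hDM⟩
  exact (hM.eq_of_subset hE hME).symm

theorem gmb_add_aux {Ω : Type u} {f g : Ω → ℝ} (hf : f ∈ Gmb Ω) (hg : g ∈ Gmb Ω) :
    f + g ∈ Gmb Ω := by
  obtain ⟨A, hA⟩ := hf
  obtain ⟨B, hB⟩ := hg
  exact ⟨A + B, fun w => (abs_add_le _ _).trans (add_le_add (hA w) (hB w))⟩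

theorem gmb_smul_aux {Ω : Type u} {f : Ω → ℝ} (hf : f ∈ Gmb Ω) (c : ℝ) :
    c • f ∈ Gmb Ω := by
  obtain ⟨A, hA⟩ := hf
  refine ⟨|c| * A, fun w => ?_⟩
  simp only [Pi.smul_apply, smul_eq_mul, abs_mul]
  exact mul_le_mul_of_nonneg_left (hA w) (abs_nonneg c)

theorem extend_aux {Ω : Type u} (D : Set (Ω → ℝ)) (hD : Coherent D) (f : Ω → ℝ)
    (hf : f ∈ Gmb Ω) (hfD : f ∉ D) (hf0 : f ≠ 0) :
    ∃ E, Coherent E ∧ D ⊆ E ∧ -f ∈ E := by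
  obtain ⟨h1, h2, h3, h4, h5⟩ := hD
  refine ⟨D ∪ {g | ∃ t : ℝ, 0 < t ∧ ∃ d, (d ∈ D ∨ d = 0) ∧ g = d + (-t) • f},
    ⟨?_, ?_, ?_, ?_, ?_⟩, subset_union_left, Or.inr ⟨1, one_pos, 0, Or.inr rfl, by simp⟩⟩
  · rintro g (hg | ⟨t, ht, d, hd, rfl⟩)
    · exact h1 hg
    · refine gmb_add_aux ?_ (gmb_smul_aux hf _)
      rcases hd with hd | rfl
      · exact h1 hd
      · exact ⟨0, by simp⟩
  · exact h2.trans subset_union_left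
  · rintro (h | ⟨t, ht, d, hd, h⟩)
    · exact h3 h
    · have hdt : d = t • f := by
        rw [neg_smul, ← sub_eq_add_neg] at h
        exact sub_eq_zero.mp h.symm
      rcases hd with hd | rfl
      · apply hfD
        have := h5 d hd t⁻¹ (inv_pos.mpr ht)
        rwa [hdt, inv_smul_smul₀ ht.ne'] at this
      · exact (smul_ne_zero ht.ne' hf0) hdt.symm
  · rintro a (ha | ⟨t, ht, d, hd, rfl⟩) b (hb | ⟨s, hs, e, he, rfl⟩)
    · exact Or.inl (h4 a ha b hb)
    · refine Or.inr ⟨s, hs, a + e, Or.inl ?_, by module⟩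
      rcases he with he | rfl
      · exact h4 a ha e he
      · simpa using ha
    · refine Or.inr ⟨t, ht, d + b, Or.inl ?_, by module⟩
      rcases hd with hd | rfl
      · exact h4 d hd b hb
      · simpa using hb
    · refine Or.inr ⟨t + s, add_pos ht hs, d + e, ?_, by module⟩
      rcases hd with hd | rfl
      · rcases he with he | rfl
        · exact Or.inl (h4 d hd e he)
        · left
          simpa using hd
      · simpa using he
  · rintro a (ha | ⟨t, ht, d, hd, rfl⟩) c hc
    · exact Or.inl (h5 a ha c hc)
    · refine Or.inr ⟨c * t, mul_pos hc ht, c • d, ?_, by module⟩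
      rcases hd with hd | rfl
      · exact Or.inl (h5 d hd c hc)
      · right
        simp

theorem stmt17 {Ω : Type u} [Nonempty Ω] (D : Set (Ω → ℝ)) (hD : Coherent D) :
    (Atoms D).Nonempty ∧ D = ⋂₀ (Atoms D) := by
  obtain ⟨M, hM, hDM⟩ := exists_max_aux D hD
  refine ⟨⟨M, hM, hDM⟩, ?_⟩
  refine Subset.antisymm (fun f hf N hN => hN.2 hf) (fun f hf => ?_)
  by_contra hfD
  have hfM : f ∈ M := hf M ⟨hM, hDM⟩
  have hf0 : f ≠ 0 := by
    rintro rfl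
    exact hM.1.2.2.1 hfM
  obtain ⟨E, hE, hDE, hfE⟩ := extend_aux D hD f (hM.1.1 hfM) hfD hf0
  obtain ⟨N, hN, hEN⟩ := exists_max_aux E hE
  have hfN : f ∈ N := hf N ⟨hN, hDE.trans hEN⟩
  have := hN.1.2.2.2.1 f hfN (-f) (hEN hfE)
  rw [add_neg_cancel] at this
  exact hN.1.2.2.1 this
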